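/- For every integer n ≥ 7, the number of partitions of n in which the smallest part occurs exactly four times and all other parts are distinct satisfies s_4(n) + 2·q(n-4) + q(n) = 2·q(n-6) + 2·q(n-1); equivalently, s_4(n) = 2q(n-6) − 2q(n-4) + 2q(n-1) − q(n). -/

import Mathlib

/-!
Write a partition counted by `s k n` as a pair `(m, A)`: its smallest part `m`, taken `k` times,
and the finite set `A` of its remaining parts, all larger than `m`; so `k * m + ∑ A = n`.

For `k ≥ 1` and `n ≥ k` this yields the recurrence
`s (k + 1) n + s k n = q (n - k) + s k (n - k)` (`s_succ_add`). Indeed, moving one of the `k + 1`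
copies of `m` into `A` identifies the left-hand side with the pairs `(m, A)`, `m ≥ 1`, such that
all elements of `A` are at least `m` and `k * m + ∑ A = n`, according to whether `m ∈ A` or not.
Lowering `m` by one, these are the pairs with `m ≥ 0`, elements of `A` larger than `m`, and
`k * m + ∑ A = n - k`; those with `m = 0` are counted by `q (n - k)`, the others by `s k (n - k)`.

Since `s 1 n = q n` for `n ≥ 1` (`s_one`), unfolding the recurrence for `k = 3, 2, 1` expresses
`s 4 n` through values of `q`; the bound `7 ≤ n` keeps every argument of `s 1` positive.
-/

/-- `q n` is the number of partitions of `n` into distinct parts. -/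
noncomputable def q (n : ℕ) : ℕ := Nat.card {p : n.Partition // p.parts.Nodup}

/-- A partition has its smallest part repeated exactly `k` times and all
other parts occurring exactly once. -/
def IsSmallestRep (k : ℕ) {n : ℕ} (p : n.Partition) : Prop :=
  ∃ m ∈ p.parts, (∀ a ∈ p.parts, m ≤ a) ∧ p.parts.count m = k ∧
    ∀ a ∈ p.parts, a ≠ m → p.parts.count a = 1

/-- `s k n` counts partitions of `n` whose smallest part occurs exactly `k`
times and whose other parts are distinct. -/
noncomputable def s (k n : ℕ) : ℕ := Nat.card {p : n.Partition // IsSmallestRep k p}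

/-- A partition has its largest part repeated exactly `k` times and all
other parts occurring exactly once. -/
def IsLargestRep (k : ℕ) {n : ℕ} (p : n.Partition) : Prop :=
  ∃ m ∈ p.parts, (∀ a ∈ p.parts, a ≤ m) ∧ p.parts.count m = k ∧
    ∀ a ∈ p.parts, a ≠ m → p.parts.count a = 1

/-- `l k n` counts partitions of `n` whose largest part occurs exactly `k`
times and whose other parts are distinct. -/
noncomputable def l (k n : ℕ) : ℕ := Nat.card {p : n.Partition // IsLargestRep k p}

/-- Pairs `(m, A)` with every element of `A` larger than `m` and `k * m + ∑ A = n`; here `m` may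
be `0`. -/
def pairs (k n : ℕ) : Set (ℕ × Finset ℕ) :=
  {x | (∀ a ∈ x.2, x.1 < a) ∧ k * x.1 + ∑ a ∈ x.2, a = n}

/-- The pairs `(m, A)` of `pairs k n` with `m` positive: the smallest part (of multiplicity `k`)
and the set of the other parts of a partition counted by `s k n`. -/
def posPairs (k n : ℕ) : Set (ℕ × Finset ℕ) :=
  {x | x ∈ pairs k n ∧ 0 < x.1}

/-- Finite sets of positive integers with sum `n`. -/
def distinctSets (n : ℕ) : Set (Finset ℕ) :=
  {A | (∀ a ∈ A, 0 < a) ∧ ∑ a ∈ A, a = n}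

lemma pairs_finite {k : ℕ} (hk : 0 < k) (n : ℕ) : (pairs k n).Finite := by
  refine (Finset.finite_toSet
    (Finset.range (n + 1) ×ˢ (Finset.range (n + 1)).powerset)).subset ?_
  rintro ⟨m, A⟩ ⟨-, h⟩
  simp only [Finset.coe_product, Set.mem_prod, Finset.mem_coe, Finset.mem_range,
    Finset.mem_powerset] at h ⊢
  have hm := Nat.le_mul_of_pos_left m hk
  refine ⟨by omega, fun a ha => ?_⟩
  have := Finset.single_le_sum (f := fun a : ℕ => a) (fun _ _ => Nat.zero_le _) ha
  simp only [Finset.mem_range] at this ⊢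
  omega

lemma posPairs_finite {k : ℕ} (hk : 0 < k) (n : ℕ) : (posPairs k n).Finite :=
  (pairs_finite hk n).subset fun _ h => h.1

lemma q_eq_ncard (n : ℕ) : q n = (distinctSets n).ncard := by
  rw [q, ← Nat.card_coe_set_eq]
  refine Nat.card_congr ⟨fun p => ⟨⟨p.1.parts, p.2⟩, fun a ha => p.1.parts_pos ha, ?_⟩,
    fun A => ⟨⟨A.1.val, fun ha => A.2.1 _ ha, ?_⟩, A.1.nodup⟩, fun _ => rfl, fun _ => rfl⟩
  · rw [Finset.sum, Multiset.map_id']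
    exact p.1.parts_sum
  · have h := A.2.2
    rwa [Finset.sum, Multiset.map_id'] at h

lemma pairs_eq (k n : ℕ) : pairs k n = (fun A => (0, A)) '' distinctSets n ∪ posPairs k n := by
  ext ⟨m, A⟩
  rcases Nat.eq_zero_or_pos m with rfl | hm
  · simp [pairs, posPairs, distinctSets]
  · simp [pairs, posPairs, hm, hm.ne]

lemma ncard_pairs {k : ℕ} (hk : 0 < k) (n : ℕ) :
    (pairs k n).ncard = q n + (posPairs k n).ncard := by
  have hfin := pairs_finite hk n
  rw [pairs_eq] at hfin ⊢
  rw [Set.ncard_union_eq _ (hfin.subset Set.subset_union_left) (posPairs_finite hk n),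
    Set.ncard_image_of_injective _ (Prod.mk_right_injective 0), q_eq_ncard]
  rw [Set.disjoint_left]
  rintro _ ⟨A, -, rfl⟩ h
  exact absurd h.2 (lt_irrefl 0)

/-- The sets `posPairs (k + 1) n` and `posPairs k n` are embedded into `pairs k (n - k)` by
`(m, A) ↦ (m - 1, insert m A)` and `(m, A) ↦ (m - 1, A)`; the images are complementary. -/
lemma ncard_posPairs_succ_add {k n : ℕ} (hk : 0 < k) (hn : k ≤ n) :
    (posPairs (k + 1) n).ncard + (posPairs k n).ncard = (pairs k (n - k)).ncard := by
  have hf : Set.InjOn (fun x : ℕ × Finset ℕ => (x.1 - 1, insert x.1 x.2))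
      (posPairs (k + 1) n) := by
    rintro ⟨m, A⟩ ⟨⟨hA, -⟩, hm⟩ ⟨m', A'⟩ ⟨⟨hA', -⟩, hm'⟩ h
    simp only [Prod.mk.injEq] at *
    obtain rfl : m = m' := by omega
    refine ⟨rfl, ?_⟩
    rw [← Finset.erase_insert (fun h => lt_irrefl _ (hA _ h)), h.2,
      Finset.erase_insert (fun h => lt_irrefl _ (hA' _ h))]
  have hg : Set.InjOn (fun x : ℕ × Finset ℕ => (x.1 - 1, x.2)) (posPairs k n) := by
    rintro ⟨m, A⟩ ⟨-, hm⟩ ⟨m', A'⟩ ⟨-, hm'⟩ h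
    simp only [Prod.mk.injEq] at *
    exact ⟨by omega, h.2⟩
  rw [← hf.ncard_image, ← hg.ncard_image,
    ← Set.ncard_union_eq _ ((posPairs_finite (k := k + 1) k.succ_pos n).image _)
      ((posPairs_finite hk n).image _)]
  · congr 1
    ext ⟨m, B⟩
    constructor
    · rintro (⟨⟨m', A⟩, ⟨⟨hA, hs⟩, hm⟩, h⟩ | ⟨⟨m', A⟩, ⟨⟨hA, hs⟩, hm⟩, h⟩)
      · simp only [Prod.mk.injEq] at *
        obtain ⟨h1, rfl⟩ := h
        obtain rfl : m' = m + 1 := by omega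
        refine ⟨fun a ha => ?_, ?_⟩
        · rcases Finset.mem_insert.1 ha with rfl | ha
          · exact Nat.lt_succ_self m
          · exact (Nat.lt_succ_self m).trans (hA a ha)
        · simp only
          rw [Finset.sum_insert (fun h => lt_irrefl _ (hA _ h))]
          have : (k + 1) * (m + 1) = k * m + k + (m + 1) := by ring
          omega
      · simp only [Prod.mk.injEq] at *
        obtain ⟨h1, rfl⟩ := h
        obtain rfl : m' = m + 1 := by omega
        refine ⟨fun a ha => (Nat.lt_succ_self m).trans (hA a ha), ?_⟩
        have : k * (m + 1) = k * m + k := by ring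
        simp only
        omega
    · rintro ⟨hB, hs⟩
      simp only at hB hs
      by_cases hmB : m + 1 ∈ B
      · refine Or.inl ⟨(m + 1, B.erase (m + 1)), ⟨⟨fun a ha => ?_, ?_⟩, Nat.succ_pos m⟩, ?_⟩
        · have := Finset.mem_erase.1 ha
          have := hB a this.2
          simp only
          omega
        · have h1 := Finset.add_sum_erase B (fun a => a) hmB
          have : (k + 1) * (m + 1) = k * m + k + (m + 1) := by ring
          simp only at h1 ⊢
          omega
        · simp [Finset.insert_erase hmB]
      · refine Or.inr ⟨(m + 1, B), ⟨⟨fun a ha => ?_, ?_⟩, Nat.succ_pos m⟩, rfl⟩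
        · have := hB a ha
          have : a ≠ m + 1 := fun h => hmB (h ▸ ha)
          simp only
          omega
        · have : k * (m + 1) = k * m + k := by ring
          simp only
          omega
  · rw [Set.disjoint_left]
    rintro _ ⟨⟨m, A⟩, ⟨-, hm⟩, rfl⟩ ⟨⟨m', A'⟩, ⟨⟨hA', -⟩, hm'⟩, h⟩
    simp only [Prod.mk.injEq] at *
    obtain rfl : m' = m := by omega
    exact lt_irrefl _ (hA' m' (h.2 ▸ Finset.mem_insert_self _ _))

/-- The partition with `k` parts equal to `m` and one part for each element of `A`. -/
def toPartition {k n : ℕ} (x : posPairs k n) : n.Partition where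
  parts := Multiset.replicate k x.1.1 + x.1.2.val
  parts_pos := by
    intro i hi
    rcases Multiset.mem_add.1 hi with h | h
    · rw [Multiset.eq_of_mem_replicate h]
      exact x.2.2
    · exact (Nat.zero_le _).trans_lt (x.2.1.1 i h)
  parts_sum := by
    rw [Multiset.sum_add, Multiset.sum_replicate, smul_eq_mul, ← Multiset.map_id' x.1.2.val]
    exact x.2.1.2

lemma isSmallestRep_toPartition {k n : ℕ} (hk : 0 < k) (x : posPairs k n) :
    IsSmallestRep k (toPartition x) := by
  obtain ⟨⟨m, A⟩, ⟨hA, hs⟩, hm⟩ := x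
  simp only at hA hs hm
  have hmA : m ∉ A := fun h => lt_irrefl _ (hA _ h)
  refine ⟨m, ?_, ?_, ?_, ?_⟩
  · exact Multiset.mem_add.2 (Or.inl (Multiset.mem_replicate.2 ⟨hk.ne', rfl⟩))
  · intro a ha
    rcases Multiset.mem_add.1 ha with h | h
    · rw [Multiset.eq_of_mem_replicate h]
    · exact (hA a h).le
  · simp [toPartition, hmA]
  · intro a ha ham
    rcases Multiset.mem_add.1 ha with h | h
    · exact absurd (Multiset.eq_of_mem_replicate h) ham
    · simp only [toPartition, Multiset.count_add, Multiset.count_replicate, if_neg ham.symm]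
      rw [Multiset.count_eq_one_of_mem A.nodup h]

lemma toPartition_injective {k n : ℕ} (hk : 0 < k) :
    Function.Injective (toPartition : posPairs k n → n.Partition) := by
  have key : ∀ x y : posPairs k n, toPartition x = toPartition y → y.1.1 ≤ x.1.1 := by
    intro x y h
    have h1 : x.1.1 ∈ (toPartition x).parts :=
      Multiset.mem_add.2 (Or.inl (Multiset.mem_replicate.2 ⟨hk.ne', rfl⟩))
    rw [h] at h1
    rcases Multiset.mem_add.1 h1 with h | h
    · rw [Multiset.eq_of_mem_replicate h]
    · exact (y.2.1.1 _ h).le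
  intro x y h
  have hm : x.1.1 = y.1.1 := le_antisymm (key y x h.symm) (key x y h)
  have hp := congrArg Nat.Partition.parts h
  simp only [toPartition, hm] at hp
  exact Subtype.ext (Prod.ext hm (Finset.val_injective (add_left_cancel hp)))

lemma exists_toPartition_eq {k n : ℕ} (p : n.Partition) (hp : IsSmallestRep k p) :
    ∃ x : posPairs k n, toPartition x = p := by
  obtain ⟨m, hm, hmin, hc, h1⟩ := hp
  let A : Finset ℕ := p.parts.toFinset.erase m
  have hparts : Multiset.replicate k m + A.val = p.parts := by
    ext a
    rw [Multiset.count_add, Multiset.count_replicate]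
    by_cases ham : a = m
    · subst ham
      rw [if_pos rfl, hc, Multiset.count_eq_zero_of_notMem (Finset.notMem_erase a _), add_zero]
    · rw [if_neg (Ne.symm ham), zero_add]
      by_cases hap : a ∈ p.parts
      · rw [h1 a hap ham, Multiset.count_eq_one_of_mem A.nodup]
        exact Finset.mem_erase.2 ⟨ham, Multiset.mem_toFinset.2 hap⟩
      · rw [Multiset.count_eq_zero_of_notMem hap, Multiset.count_eq_zero_of_notMem]
        exact fun h => hap (Multiset.mem_toFinset.1 (Finset.mem_of_mem_erase h))
  refine ⟨⟨(m, A), ⟨fun a ha => ?_, ?_⟩, p.parts_pos hm⟩, Nat.Partition.ext hparts⟩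
  · simp only [A, Finset.mem_erase, Multiset.mem_toFinset] at ha
    exact lt_of_le_of_ne (hmin a ha.2) (Ne.symm ha.1)
  · have := congrArg Multiset.sum hparts
    rw [p.parts_sum, Multiset.sum_add, Multiset.sum_replicate, smul_eq_mul,
      ← Multiset.map_id' A.val] at this
    exact this

lemma s_eq_ncard {k : ℕ} (hk : 0 < k) (n : ℕ) : s k n = (posPairs k n).ncard := by
  rw [s, ← Nat.card_coe_set_eq]
  symm
  refine Nat.card_eq_of_bijective
    (fun x : posPairs k n => (⟨toPartition x, isSmallestRep_toPartition hk x⟩ :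
      {p : n.Partition // IsSmallestRep k p})) ⟨fun x y h => ?_, fun p => ?_⟩
  · exact toPartition_injective hk (congrArg Subtype.val h)
  · obtain ⟨x, hx⟩ := exists_toPartition_eq p.1 p.2
    exact ⟨x, Subtype.ext hx⟩

lemma s_succ_add {k n : ℕ} (hk : 0 < k) (hn : k ≤ n) :
    s (k + 1) n + s k n = q (n - k) + s k (n - k) := by
  rw [s_eq_ncard (k := k + 1) k.succ_pos, s_eq_ncard hk, s_eq_ncard hk, ncard_posPairs_succ_add hk hn,
    ncard_pairs hk]

lemma s_one {n : ℕ} (hn : 0 < n) : s 1 n = q n := by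
  refine Nat.card_congr (Equiv.subtypeEquivRight fun p => ⟨?_, fun h => ?_⟩)
  · rintro ⟨m, hm, -, hc, h1⟩
    rw [Multiset.nodup_iff_count_eq_one]
    intro a ha
    by_cases ham : a = m
    · rw [ham, hc]
    · exact h1 a ha ham
  · rw [Multiset.nodup_iff_count_eq_one] at h
    have hne : p.parts.toFinset.Nonempty := by
      rw [Multiset.toFinset_nonempty]
      intro h0
      have := p.parts_sum
      rw [h0, Multiset.sum_zero] at this
      omega
    obtain ⟨m, hm, hmin⟩ := Finset.exists_min_image _ id hne
    rw [Multiset.mem_toFinset] at hm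
    exact ⟨m, hm, fun a ha => hmin a (Multiset.mem_toFinset.2 ha), h m hm,
      fun a ha _ => h a ha⟩

lemma s_two_add {n : ℕ} (hn : 2 ≤ n) : s 2 n + q n = 2 * q (n - 1) := by
  have h : s 2 n + s 1 n = q (n - 1) + s 1 (n - 1) := s_succ_add one_pos (by omega)
  rw [s_one (by omega), s_one (by omega)] at h
  omega

theorem s4_eq (n : ℕ) (hn : 7 ≤ n) :
    s 4 n + 2 * q (n - 4) + q n = 2 * q (n - 6) + 2 * q (n - 1) := by
  have h4 : s 4 n + s 3 n = q (n - 3) + s 3 (n - 3) := s_succ_add (by omega) (by omega)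
  have h3 : s 3 n + s 2 n = q (n - 2) + s 2 (n - 2) := s_succ_add (by omega) (by omega)
  have h3' : s 3 (n - 3) + s 2 (n - 3) = q (n - 3 - 2) + s 2 (n - 3 - 2) :=
    s_succ_add (by omega) (by omega)
  have h2 := s_two_add (n := n) (by omega)
  have h2a := s_two_add (n := n - 2) (by omega)
  have h2b := s_two_add (n := n - 3) (by omega)
  have h2c := s_two_add (n := n - 5) (by omega)
  simp only [Nat.sub_sub, Nat.reduceAdd] at *
  omega
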